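/- Let d = 2. The numbers a(n,0) of loopless linear diagrams satisfy the second-order recurrence a(n+1,0) = (2n+1) · a(n,0) + a(n−1,0) for every integer n ≥ 1, with initial values a(0,0) = 1 and a(1,0) = 0. -/

import Mathlib

/-- A generalized linear diagram on points `1,…,N` whose blocks all have size `d`:
a partition of `{1,…,N}` into blocks of size `d`. -/
def IsLinearDiagram (N d : ℕ) (P : Finset (Finset ℕ)) : Prop :=
  (∀ b ∈ P, b.card = d) ∧ (∀ b ∈ P, ∀ x ∈ b, x ∈ Finset.Icc 1 N) ∧
    ∀ x ∈ Finset.Icc 1 N, ∃! b : Finset ℕ, b ∈ P ∧ x ∈ b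

/-- The number of loops of a linear diagram on points `1,…,N`: indices `i` with
`1 ≤ i ≤ N - 1` such that `i` and `i + 1` lie in the same block. -/
noncomputable def linLoops (N : ℕ) (P : Finset (Finset ℕ)) : ℕ :=
  Set.ncard {i : ℕ | 1 ≤ i ∧ i + 1 ≤ N ∧ ∃ b ∈ P, i ∈ b ∧ i + 1 ∈ b}

/-- `numA d n k` : the number of generalized linear diagrams of order `(n,d)`
with exactly `k` loops. -/
noncomputable def numA (d n k : ℕ) : ℕ :=
  Set.ncard {P : Finset (Finset ℕ) | IsLinearDiagram (n * d) d P ∧ linLoops (n * d) P = k}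

/-- `numA` with an integer loop index, zero for negative indices. -/
noncomputable def numAZ (d n : ℕ) (k : ℤ) : ℕ :=
  if 0 ≤ k then numA d n k.toNat else 0

/-- Binomial coefficient with integer arguments: `0` when `y < 0` or `y > x`. -/
def iChoose (x y : ℤ) : ℕ :=
  if 0 ≤ y ∧ y ≤ x then x.toNat.choose y.toNat else 0

/-- A generalized chord diagram on `ZMod N` whose blocks all have size `d`:
a partition of `ZMod N` into blocks of size `d`. -/
def IsChordDiagram (N d : ℕ) (P : Finset (Finset (ZMod N))) : Prop :=
  (∀ b ∈ P, b.card = d) ∧ ∀ x : ZMod N, ∃! b : Finset (ZMod N), b ∈ P ∧ x ∈ b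

/-- A chord diagram is loopless if no residues `i`, `i+1` lie in the same block. -/
def ChordLoopless (N : ℕ) (P : Finset (Finset (ZMod N))) : Prop :=
  ∀ i : ZMod N, ∀ b ∈ P, i ∈ b → i + 1 ∈ b → False

/-- `numB d n` : the number of loopless generalized chord diagrams of order `(n,d)`. -/
noncomputable def numB (d n : ℕ) : ℕ :=
  Set.ncard {P : Finset (Finset (ZMod (n * d))) |
    IsChordDiagram (n * d) d P ∧ ChordLoopless (n * d) P}

/-- The shift `i ↦ i + v` modulo `M`, on the representatives `1,…,M`. -/
def shiftMod (M v i : ℕ) : ℕ := if i + v ≤ M then i + v else i + v - M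

/-- An `m`-symmetric linear diagram with sector size `v` and blocks of size `d`:
a partition of `{1,…,m·v}` into blocks of size `d` invariant under the shift by `v`
modulo `m·v`. -/
def IsMSymLinear (d m v : ℕ) (P : Finset (Finset ℕ)) : Prop :=
  IsLinearDiagram (m * v) d P ∧ ∀ b ∈ P, b.image (shiftMod (m * v) v) ∈ P

/-- The number of loops lying in sector `s` (sectors numbered from `0`):
indices `i` with `s·v + 1 ≤ i ≤ (s+1)·v - 1` such that `i` and `i + 1` lie
in the same block. -/
noncomputable def sectorLoops (v : ℕ) (P : Finset (Finset ℕ)) (s : ℕ) : ℕ :=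
  Set.ncard {i : ℕ | s * v + 1 ≤ i ∧ i + 1 ≤ (s + 1) * v ∧ ∃ b ∈ P, i ∈ b ∧ i + 1 ∈ b}

/-- `numAtil d m v k` : the number of `m`-symmetric linear diagrams with sector size `v`,
blocks of size `d`, and exactly `k` loops in each sector (`ã(v,k;m,d)`). -/
noncomputable def numAtil (d m v k : ℕ) : ℕ :=
  Set.ncard {P : Finset (Finset ℕ) |
    IsMSymLinear d m v P ∧ ∀ s < m, sectorLoops v P s = k}

def VV (N : ℕ) (f : ℕ → ℕ) : Prop :=
  (∀ x, f (f x) = x) ∧ (∀ x, (x = 0 ∨ N < x) → f x = x) ∧ ∀ x, 1 ≤ x → x ≤ N → f x ≠ x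

lemma VV.range {N : ℕ} {f : ℕ → ℕ} (h : VV N f) (x : ℕ) (h1 : 1 ≤ x) (h2 : x ≤ N) :
    1 ≤ f x ∧ f x ≤ N := by
  obtain ⟨a, b, c⟩ := h
  have := b (f x)
  have := a x
  have := c x h1 h2
  by_contra hh
  have : f x = 0 ∨ N < f x := by omega
  grind

def AA (N : ℕ) : Set (ℕ → ℕ) := {f | VV N f ∧ ∀ i, 1 ≤ i → i + 1 ≤ N → f i ≠ i + 1}

/-- pairs (g,p), all loops of g are at p-1, p at most M -/
def CC (N M : ℕ) : Set ((ℕ → ℕ) × ℕ) :=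
  {q | VV N q.1 ∧ 1 ≤ q.2 ∧ q.2 ≤ M ∧ ∀ i, 1 ≤ i → i + 1 ≤ N → q.1 i = i + 1 → i + 1 = q.2}

/-- one-loop matchings, with the loop at (p, p+1) -/
def BB (N : ℕ) : Set ((ℕ → ℕ) × ℕ) :=
  {q | VV N q.1 ∧ 1 ≤ q.2 ∧ q.2 + 1 ≤ N ∧ q.1 q.2 = q.2 + 1 ∧
    ∀ i, 1 ≤ i → i + 1 ≤ N → q.1 i = i + 1 → i = q.2}

def dl (k p x : ℕ) : ℕ := if x < p then x else x + k
def sl (k p x : ℕ) : ℕ := if x < p then x else x - k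

def insLast (N : ℕ) (q : (ℕ → ℕ) × ℕ) : ℕ → ℕ := fun x =>
  if x = q.2 then N + 2 else if x = N + 2 then q.2 else dl 1 q.2 (q.1 (sl 1 q.2 x))

def delLast (N : ℕ) (f : ℕ → ℕ) : (ℕ → ℕ) × ℕ :=
  (fun x => if x ≤ N then sl 1 (f (N + 2)) (f (dl 1 (f (N + 2)) x)) else x, f (N + 2))

def insLoop (q : (ℕ → ℕ) × ℕ) : (ℕ → ℕ) × ℕ := (fun x =>
  if x = q.2 then q.2 + 1 else if x = q.2 + 1 then q.2 else dl 2 q.2 (q.1 (sl 2 q.2 x)), q.2)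

def delLoop (q : (ℕ → ℕ) × ℕ) : (ℕ → ℕ) × ℕ :=
  (fun x => sl 2 q.2 (q.1 (dl 2 q.2 x)), q.2)

lemma insLast_maps (N : ℕ) : Set.MapsTo (insLast N) (CC N N) (AA (N + 2)) := by
  rintro ⟨f, p⟩ ⟨hV, h1, h2, h3⟩
  have hr := hV.range
  obtain ⟨a, b, c⟩ := hV
  simp only at *
  refine ⟨⟨?_, ?_, ?_⟩, ?_⟩
  all_goals simp only [insLast, dl, sl]
  all_goals grind

lemma delLast_maps (N : ℕ) : Set.MapsTo (delLast N) (AA (N + 2)) (CC N N) := by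
  rintro f ⟨hV, h3⟩
  have hr := hV.range
  obtain ⟨a, b, c⟩ := hV
  have := hr (N + 2)
  have := c (N + 2)
  have := h3 (N + 1)
  have := a (N + 2)
  refine ⟨⟨?_, ?_, ?_⟩, ?_, ?_, ?_⟩
  all_goals simp only [delLast, dl, sl]
  all_goals grind

lemma ins_del_last (N : ℕ) : Set.InvOn (delLast N) (insLast N) (CC N N) (AA (N + 2)) := by
  constructor
  · rintro ⟨f, p⟩ ⟨hV, h1, h2, h3⟩
    have hr := hV.range
    obtain ⟨a, b, c⟩ := hV
    simp only at *
    simp only [delLast, insLast, dl, sl]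
    ext x
    · grind
    · grind
  · rintro f ⟨hV, h3⟩
    have hr := hV.range
    obtain ⟨a, b, c⟩ := hV
    have := hr (N + 2)
    have := c (N + 2)
    have := h3 (N + 1)
    have := a (N + 2)
    ext x
    simp only [delLast, insLast, dl, sl]
    grind

lemma insLoop_maps (N : ℕ) : Set.MapsTo insLoop (CC N (N + 1)) (BB (N + 2)) := by
  rintro ⟨f, p⟩ ⟨hV, h1, h2, h3⟩
  have hr := hV.range
  obtain ⟨a, b, c⟩ := hV
  simp only at *
  refine ⟨⟨?_, ?_, ?_⟩, ?_, ?_, ?_, ?_⟩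
  all_goals simp only [insLoop, dl, sl]
  all_goals grind

lemma delLoop_maps (N : ℕ) : Set.MapsTo delLoop (BB (N + 2)) (CC N (N + 1)) := by
  rintro ⟨f, p⟩ ⟨hV, h1, h2, h3, h4⟩
  have hr := hV.range
  obtain ⟨a, b, c⟩ := hV
  simp only at *
  have := a p
  have k1 : ∀ x, f (dl 2 p x) ≠ p ∧ f (dl 2 p x) ≠ p + 1 := by
    intro x
    have e : dl 2 p x ≠ p ∧ dl 2 p x ≠ p + 1 := by simp only [dl]; grind
    have := a (dl 2 p x)
    grind
  have k2 : ∀ y, y ≠ p ∧ y ≠ p + 1 → dl 2 p (sl 2 p y) = y := by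
    intro y; simp only [dl, sl]; grind
  refine ⟨⟨fun x => ?_, ?_, ?_⟩, ?_, ?_, ?_⟩
  · simp only [delLoop]
    rw [k2 _ (k1 x), a]
    simp only [dl, sl]; grind
  all_goals simp only [delLoop, dl, sl]
  all_goals grind

lemma ins_del_loop (N : ℕ) : Set.InvOn delLoop insLoop (CC N (N + 1)) (BB (N + 2)) := by
  constructor
  · rintro ⟨f, p⟩ ⟨hV, h1, h2, h3⟩
    have hr := hV.range
    obtain ⟨a, b, c⟩ := hV
    simp only at *
    simp only [delLoop, insLoop, dl, sl]
    ext x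
    · grind
    · grind
  · rintro ⟨f, p⟩ ⟨hV, h1, h2, h3, h4⟩
    have hr := hV.range
    obtain ⟨a, b, c⟩ := hV
    simp only at *
    have := a p
    simp only [delLoop, insLoop, dl, sl]
    ext x
    · grind
    · grind

lemma encard_bij {α β : Type*} {s : Set α} {t : Set β} {f : α → β} {g : β → α}
    (h : Set.InvOn g f s t) (h1 : Set.MapsTo f s t) (h2 : Set.MapsTo g t s) :
    s.encard = t.encard := by
  have hb := h.bijOn h1 h2
  rw [← hb.image_eq, hb.injOn.encard_image]

lemma card_AC (N : ℕ) : (AA (N + 2)).encard = (CC N N).encard :=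
  (encard_bij (ins_del_last N) (insLast_maps N) (delLast_maps N)).symm

lemma card_BC (N : ℕ) : (BB (N + 2)).encard = (CC N (N + 1)).encard :=
  (encard_bij (ins_del_loop N) (insLoop_maps N) (delLoop_maps N)).symm

lemma card_C1 (N : ℕ) : (CC N (N + 1)).encard = (CC N N).encard + (AA N).encard := by
  have : CC N (N + 1) = CC N N ∪ (fun f => (f, N + 1)) '' AA N := by
    ext ⟨f, p⟩
    simp only [CC, AA, Set.mem_union, Set.mem_image, Set.mem_setOf_eq, Prod.mk.injEq]
    grind
  rw [this, Set.encard_union_eq, Function.Injective.encard_image]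
  · intro a b h; simpa using h
  · rw [Set.disjoint_left]
    rintro ⟨f, p⟩ h ⟨g, _, h'⟩
    simp [CC] at h h'
    omega

lemma card_C (N : ℕ) : (CC N N).encard = N * (AA N).encard + (BB N).encard := by
  have : CC N N = (AA N ×ˢ (Set.Icc 1 N)) ∪ (fun q : (ℕ → ℕ) × ℕ => (q.1, q.2 + 1)) '' BB N := by
    ext ⟨f, p⟩
    simp only [CC, AA, BB, Set.mem_union, Set.mem_image, Set.mem_setOf_eq, Prod.mk.injEq,
      Set.mem_prod, Set.mem_Icc, Prod.exists]
    constructor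
    · rintro ⟨h0, h1, h2, h3⟩
      by_cases h : ∃ i, 1 ≤ i ∧ i + 1 ≤ N ∧ f i = i + 1
      · right
        obtain ⟨i, hi1, hi2, hi3⟩ := h
        exact ⟨f, i, ⟨h0, hi1, hi2, hi3, by grind⟩, rfl, by grind⟩
      · left; grind
    · grind
  rw [this, Set.encard_union_eq, Function.Injective.encard_image, Set.encard_prod, mul_comm]
  · congr 2
    rw [← Finset.coe_Icc, Set.encard_coe_eq_coe_finsetCard]; simp
  · rintro ⟨a, b⟩ ⟨c, d⟩ h; simpa using h
  · rw [Set.disjoint_left]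
    rintro ⟨f, p⟩ h ⟨⟨g, r⟩, h2, h'⟩
    simp only [AA, BB, Set.mem_prod, Set.mem_setOf_eq, Prod.mk.injEq] at h h' h2
    grind

lemma AA_rec (N : ℕ) : (AA (N + 4)).encard = (N + 3) * (AA (N + 2)).encard + (AA N).encard := by
  rw [card_AC, card_C, card_BC, card_C1, ← card_AC]
  push_cast
  ring

/-- the set of blocks -/
def toP (N : ℕ) (f : ℕ → ℕ) : Finset (Finset ℕ) := (Finset.Icc 1 N).image fun x => {x, f x}

def PP (N : ℕ) : Set (Finset (Finset ℕ)) := {P | IsLinearDiagram N 2 P ∧ linLoops N P = 0}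

lemma PP_finite (N : ℕ) : (PP N).Finite := by
  refine Set.Finite.subset (Finset.finite_toSet ((Finset.Icc 1 N).powerset.powerset)) ?_
  rintro P ⟨h, -⟩
  rw [Finset.mem_coe, Finset.mem_powerset]
  intro b hb
  rw [Finset.mem_powerset]
  exact fun x hx => h.2.1 b hb x hx

lemma loops_iff (N : ℕ) (P : Finset (Finset ℕ)) : linLoops N P = 0 ↔
    ∀ i, 1 ≤ i → i + 1 ≤ N → ∀ b ∈ P, i ∈ b → i + 1 ∉ b := by
  unfold linLoops
  rw [Set.ncard_eq_zero (Set.Finite.subset (Set.finite_Icc 1 N) (by rintro i ⟨h, h', _⟩; exact ⟨h, by omega⟩))]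
  rw [Set.eq_empty_iff_forall_notMem]
  simp only [Set.mem_setOf_eq]
  grind

lemma toP_maps (N : ℕ) : Set.MapsTo (toP N) (AA N) (PP N) := by
  rintro f ⟨hV, h3⟩
  have hr := hV.range
  obtain ⟨a, b, c⟩ := hV
  refine ⟨⟨?_, ?_, ?_⟩, (loops_iff _ _).2 ?_⟩
  · simp only [toP, Finset.mem_image, Finset.mem_Icc]
    rintro _ ⟨x, hx, rfl⟩
    exact Finset.card_pair (c x hx.1 hx.2).symm
  · simp only [toP, Finset.mem_image, Finset.mem_Icc]
    rintro _ ⟨x, hx, rfl⟩ y hy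
    simp at hy
    grind
  · intro x hx
    simp only [toP, Finset.mem_image, Finset.mem_Icc] at *
    refine ⟨{x, f x}, ⟨⟨x, hx, rfl⟩, by simp⟩, ?_⟩
    rintro _ ⟨⟨y, hy, rfl⟩, h⟩
    simp at h
    rcases h with rfl | rfl
    · rfl
    · rw [a, Finset.pair_comm]
  · intro i h1 h2
    simp only [toP, Finset.mem_image, Finset.mem_Icc] at *
    rintro _ ⟨y, hy, rfl⟩
    simp
    grind

lemma toP_inj (N : ℕ) : Set.InjOn (toP N) (AA N) := by
  rintro f ⟨hV, h3⟩ g ⟨hV', h3'⟩ h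
  have hr := hV.range
  obtain ⟨a, b, c⟩ := hV
  obtain ⟨a', b', c'⟩ := hV'
  ext x
  by_cases hx : 1 ≤ x ∧ x ≤ N
  · have : ({x, f x} : Finset ℕ) ∈ toP N g := by
      rw [← h]; simp only [toP, Finset.mem_image, Finset.mem_Icc]; exact ⟨x, hx, rfl⟩
    simp only [toP, Finset.mem_image, Finset.mem_Icc] at this
    obtain ⟨y, hy, hxy⟩ := this
    have e1 : x ∈ ({y, g y} : Finset ℕ) := by rw [hxy]; simp
    have e2 : f x ∈ ({y, g y} : Finset ℕ) := by rw [hxy]; simp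
    simp at e1 e2
    have := c x hx.1 hx.2
    grind
  · rw [b x (by omega), b' x (by omega)]

lemma toP_surj (N : ℕ) : Set.SurjOn (toP N) (AA N) (PP N) := by
  rintro P ⟨⟨h1, h2, h3⟩, h4⟩
  rw [loops_iff] at h4
  have key : ∀ x, ∃ y, (x ∈ Finset.Icc 1 N → x ≠ y ∧ ({x, y} : Finset ℕ) ∈ P) ∧
      (x ∉ Finset.Icc 1 N → y = x) := by
    intro x
    by_cases hx : x ∈ Finset.Icc 1 N
    · obtain ⟨b, ⟨hb, hxb⟩, -⟩ := h3 x hx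
      obtain ⟨u, v, huv, rfl⟩ := Finset.card_eq_two.1 (h1 b hb)
      simp at hxb
      rcases hxb with rfl | rfl
      · exact ⟨v, fun _ => ⟨huv, hb⟩, fun h => absurd hx h⟩
      · exact ⟨u, fun _ => ⟨huv.symm, by rwa [Finset.pair_comm]⟩, fun h => absurd hx h⟩
    · exact ⟨x, fun h => absurd h hx, fun _ => rfl⟩
  choose f hf hf' using key
  have uniq : ∀ x ∈ Finset.Icc 1 N, ∀ b ∈ P, x ∈ b → b = {x, f x} := by
    intro x hx b hb hxb
    exact (h3 x hx).unique ⟨hb, hxb⟩ ⟨(hf x hx).2, by simp⟩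
  have hr : ∀ x ∈ Finset.Icc 1 N, f x ∈ Finset.Icc 1 N := fun x hx =>
    h2 _ (hf x hx).2 _ (by simp)
  refine ⟨f, ⟨⟨?_, ?_, ?_⟩, ?_⟩, ?_⟩
  · intro x
    by_cases hx : x ∈ Finset.Icc 1 N
    · have e := uniq (f x) (hr x hx) _ (hf x hx).2 (by simp)
      have e1 : x ∈ ({f x, f (f x)} : Finset ℕ) := by rw [← e]; simp
      simp at e1
      have := (hf x hx).1
      grind
    · rw [hf' x hx, hf' x hx]
  · intro x hx
    exact hf' x (by simp; omega)
  · intro x hx hx'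
    exact (hf x (by simp; omega)).1.symm
  · intro i hi hi' he
    have := (hf i (by simp; omega)).2
    exact h4 i hi hi' _ this (by simp) (by simp [he])
  · ext b
    simp only [toP, Finset.mem_image]
    constructor
    · rintro ⟨x, hx, rfl⟩
      exact (hf x hx).2
    · intro hb
      obtain ⟨x, hx⟩ : b.Nonempty := by
        rw [← Finset.card_pos, h1 b hb]; norm_num
      have := h2 b hb x hx
      exact ⟨x, this, (uniq x this b hb hx).symm⟩

lemma numA_eq (n : ℕ) : (numA 2 n 0 : ℕ∞) = (AA (n * 2)).encard := by
  change ((PP (n * 2)).ncard : ℕ∞) = _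
  rw [(PP_finite _).cast_ncard_eq]
  have hb : Set.BijOn (toP (n * 2)) (AA (n * 2)) (PP (n * 2)) := ⟨toP_maps _, toP_inj _, toP_surj _⟩
  rw [← hb.image_eq, hb.injOn.encard_image]

/-- for `d = 2`, the second-order recurrence
`a(n+1,0) = (2n+1)·a(n,0) + a(n−1,0)` for `n ≥ 1`, with `a(0,0) = 1`, `a(1,0) = 0`. -/
theorem linear_second_order_rec :
    (∀ n : ℕ, 1 ≤ n →
        numA 2 (n + 1) 0 = (2 * n + 1) * numA 2 n 0 + numA 2 (n - 1) 0) ∧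
      numA 2 0 0 = 1 ∧ numA 2 1 0 = 0 := by
  refine ⟨?_, ?_, ?_⟩
  · intro n hn
    obtain ⟨m, rfl⟩ : ∃ m, n = m + 1 := ⟨n - 1, by omega⟩
    have := AA_rec (m * 2)
    rw [show m * 2 + 4 = (m + 1 + 1) * 2 by ring, show m * 2 + 2 = (m + 1) * 2 by ring,
      ← numA_eq, ← numA_eq, ← numA_eq] at this
    have h2 : numA 2 (m + 1 + 1) 0 = (m * 2 + 3) * numA 2 (m + 1) 0 + numA 2 m 0 := by
      exact_mod_cast this
    rw [h2, Nat.add_sub_cancel]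
    ring
  · have h := numA_eq 0
    have : AA (0 * 2) = {id} := by
      ext f
      simp only [AA, VV, Set.mem_setOf_eq, Set.mem_singleton_iff]
      constructor
      · rintro ⟨⟨_, b, _⟩, _⟩
        ext x
        exact b x (by omega)
      · rintro rfl
        simp
        omega
    rw [this, Set.encard_singleton] at h
    exact_mod_cast h
  · have h := numA_eq 1
    have : AA (1 * 2) = ∅ := by
      rw [Set.eq_empty_iff_forall_notMem]
      rintro f ⟨hV, h3⟩
      have := hV.range 1 le_rfl (by norm_num)
      have := hV.2.2 1 le_rfl (by norm_num)
      have := h3 1 le_rfl (by norm_num)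
      omega
    rw [this, Set.encard_empty] at h
    exact_mod_cast h
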